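/- arXiv:2602.07530 — 6 statements merged into one kernel-verified Lean document; each statement's English description precedes it below -/
import Mathlib

section
/- Let H = (V, 𝓔) be a finite weighted hypergraph with total weight W, let ε ∈ [0,1], and suppose there exists a set O ⊆ V with |O| = r and e(O) ≥ (1−ε)W. Let (x*, z*) with x* : V → [0,1], z* : 𝓔 → [0,1] be an optimal solution of the conformal-subgraph LP at coverage parameter ε (in particular Σ_{v∈V} x*_v ≤ r, since the indicator of O is feasible). Fix κ > 0, set ρ = κ/(1+κ), and let K = {v ∈ V : x*_v ≥ ρ}. Then W − e(K) ≤ (1+κ)·ε·W and |K| ≤ (1 + 1/κ)·r. -/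
open Finset

/-- Total induced weight of hyperedges contained in `K`. -/
noncomputable def inducedWeight {V : Type*} [DecidableEq V]
    (𝓔 : Finset (Finset V)) (w : Finset V → ℝ) (K : Finset V) : ℝ :=
  ∑ e ∈ 𝓔.filter (fun e => e ⊆ K), w e

/-- Total weight of the hypergraph. -/
noncomputable def totalWeight {V : Type*} [DecidableEq V]
    (𝓔 : Finset (Finset V)) (w : Finset V → ℝ) : ℝ :=
  ∑ e ∈ 𝓔, w e

/-- Feasibility for the conformal-subgraph LP at coverage parameter `ε`. -/
def LPFeasible {V : Type*} [Fintype V] [DecidableEq V]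
    (𝓔 : Finset (Finset V)) (w : Finset V → ℝ) (ε : ℝ)
    (x : V → ℝ) (z : Finset V → ℝ) : Prop :=
  (∀ v, x v ∈ Set.Icc (0:ℝ) 1) ∧
  (∀ e ∈ 𝓔, z e ∈ Set.Icc (0:ℝ) 1) ∧
  (∀ e ∈ 𝓔, ∀ v ∈ e, z e ≤ x v) ∧
  (1 - ε) * totalWeight 𝓔 w ≤ ∑ e ∈ 𝓔, w e * z e

/-!
Both bounds are Markov's inequality for finite sums. The vertices of `K` are those where `x` is at
least `ρ`, so `ρ * |K| ≤ ∑ x`, and by optimality `∑ x` is at most the value `|O|` of the indicator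
of `O`. A hyperedge that is not contained in `K` has a vertex with `x v < ρ`, so its deficit
`1 - z e` is at least `1 - ρ = 1 / (1 + κ)`, while the total weighted deficit is at most `ε * W`.
-/

section Markov

variable {ι R : Type*} [Semiring R] [PartialOrder R] [IsOrderedRing R]

theorem sum_mul_le_sum_mul_of_subset {s t : Finset ι} {w f : ι → R} {c : R} (hts : t ⊆ s)
    (hw : ∀ i ∈ s, 0 ≤ w i) (hf : ∀ i ∈ s, 0 ≤ f i) (hc : ∀ i ∈ t, c ≤ f i) :
    (∑ i ∈ t, w i) * c ≤ ∑ i ∈ s, w i * f i :=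
  calc (∑ i ∈ t, w i) * c = ∑ i ∈ t, w i * c := sum_mul ..
    _ ≤ ∑ i ∈ t, w i * f i :=
      sum_le_sum fun i hi => mul_le_mul_of_nonneg_left (hc i hi) (hw i (hts hi))
    _ ≤ ∑ i ∈ s, w i * f i :=
      sum_le_sum_of_subset_of_nonneg hts fun i hi _ => mul_nonneg (hw i hi) (hf i hi)

theorem card_filter_le_mul_le_sum {s : Finset ι} {f : ι → R} (hf : ∀ i ∈ s, 0 ≤ f i) (c : R)
    [DecidablePred fun i => c ≤ f i] :
    (#{i ∈ s | c ≤ f i} : R) * c ≤ ∑ i ∈ s, f i := by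
  simpa using sum_mul_le_sum_mul_of_subset (w := 1) (filter_subset (fun i => c ≤ f i) s)
    (fun _ _ => zero_le_one) hf fun _ hi => (mem_filter.mp hi).2

end Markov

section ConformalLP

variable {V : Type*} [DecidableEq V] {𝓔 : Finset (Finset V)} {w : Finset V → ℝ} {ε : ℝ}

theorem totalWeight_sub_inducedWeight (𝓔 : Finset (Finset V)) (w : Finset V → ℝ)
    (K : Finset V) :
    totalWeight 𝓔 w - inducedWeight 𝓔 w K = ∑ e ∈ 𝓔 with ¬e ⊆ K, w e :=
  sub_eq_of_eq_add' (sum_filter_add_sum_filter_not 𝓔 (· ⊆ K) w).symm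

variable [Fintype V] {x : V → ℝ} {z : Finset V → ℝ}

theorem lpFeasible_indicator {O : Finset V}
    (hO : (1 - ε) * totalWeight 𝓔 w ≤ inducedWeight 𝓔 w O) :
    LPFeasible 𝓔 w ε (fun v => if v ∈ O then 1 else 0) (fun e => if e ⊆ O then 1 else 0) := by
  have ite_mem_Icc (p : Prop) [Decidable p] : (if p then 1 else 0 : ℝ) ∈ Set.Icc (0 : ℝ) 1 := by
    split_ifs <;> simp
  refine ⟨fun v => ite_mem_Icc _, fun e _ => ite_mem_Icc _, fun e _ v hv => ?_, ?_⟩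
  · by_cases heO : e ⊆ O
    · simp [heO, heO hv]
    · simpa [heO] using (ite_mem_Icc (v ∈ O)).1
  · simpa [inducedWeight, sum_filter] using hO

theorem LPFeasible.sum_mul_one_sub_le (h : LPFeasible 𝓔 w ε x z) :
    ∑ e ∈ 𝓔, w e * (1 - z e) ≤ ε * totalWeight 𝓔 w := by
  obtain ⟨-, -, -, coverage⟩ := h
  calc ∑ e ∈ 𝓔, w e * (1 - z e) = totalWeight 𝓔 w - ∑ e ∈ 𝓔, w e * z e := by
        simp only [mul_one_sub, sum_sub_distrib, totalWeight]
    _ ≤ ε * totalWeight 𝓔 w := by linarith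

theorem LPFeasible.lt_of_not_subset_filter (h : LPFeasible 𝓔 w ε x z) {e : Finset V}
    (he : e ∈ 𝓔) {ρ : ℝ} (heK : ¬e ⊆ ({v | ρ ≤ x v} : Finset V)) : z e < ρ := by
  obtain ⟨v, hve, hvK⟩ := not_subset.mp heK
  have hxv : x v < ρ := by simpa using hvK
  exact (h.2.2.1 e he v hve).trans_lt hxv

theorem LPFeasible.totalWeight_sub_inducedWeight_mul_le (h : LPFeasible 𝓔 w ε x z)
    (hw : ∀ e ∈ 𝓔, 0 ≤ w e) (ρ : ℝ) :
    (totalWeight 𝓔 w - inducedWeight 𝓔 w {v | ρ ≤ x v}) * (1 - ρ) ≤ ε * totalWeight 𝓔 w := by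
  rw [totalWeight_sub_inducedWeight]
  refine le_trans (sum_mul_le_sum_mul_of_subset (filter_subset _ _) hw ?_ ?_) h.sum_mul_one_sub_le
  · exact fun e he => sub_nonneg.mpr (h.2.1 e he).2
  · intro e he
    obtain ⟨he, heK⟩ := mem_filter.mp he
    exact sub_le_sub_left (h.lt_of_not_subset_filter he heK).le 1

end ConformalLP

/-- bicriteria guarantee of LP rounding (Theorem `main-det`). -/
theorem lp_rounding_bicriteria {V : Type*} [Fintype V] [DecidableEq V]
    (𝓔 : Finset (Finset V)) (w : Finset V → ℝ) (hw : ∀ e ∈ 𝓔, 0 ≤ w e)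
    (ε : ℝ) (hε : ε ∈ Set.Icc (0:ℝ) 1)
    (O : Finset V) (r : ℕ) (hOcard : O.card = r)
    (hOcov : (1 - ε) * totalWeight 𝓔 w ≤ inducedWeight 𝓔 w O)
    (x : V → ℝ) (z : Finset V → ℝ)
    (hfeas : LPFeasible 𝓔 w ε x z)
    (hopt : ∀ x' z', LPFeasible 𝓔 w ε x' z' → ∑ v, x v ≤ ∑ v, x' v)
    (κ : ℝ) (hκ : 0 < κ) :
    totalWeight 𝓔 w -
        inducedWeight 𝓔 w (Finset.univ.filter (fun v => κ / (1 + κ) ≤ x v)) ≤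
      (1 + κ) * ε * totalWeight 𝓔 w ∧
    ((Finset.univ.filter (fun v => κ / (1 + κ) ≤ x v)).card : ℝ) ≤ (1 + 1 / κ) * r := by
  have one_sub_threshold : 1 - κ / (1 + κ) = (1 + κ)⁻¹ := by field_simp; ring
  have sum_le : ∑ v, x v ≤ r := by
    simpa [hOcard] using hopt _ _ (lpFeasible_indicator hOcov)
  constructor
  · have uncovered := hfeas.totalWeight_sub_inducedWeight_mul_le hw (κ / (1 + κ))
    rwa [one_sub_threshold, mul_inv_le_iff₀' (by positivity), ← mul_assoc] at uncovered
  · have card_mul_le := (card_filter_le_mul_le_sum (fun v _ => (hfeas.1 v).1) (κ / (1 + κ))).trans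
      sum_le
    calc _ ≤ r / (κ / (1 + κ)) := (le_div_iff₀ (by positivity)).mpr card_mul_le
      _ = (1 + 1 / κ) * r := by field_simp; ring
end

section
/- Let H = (V, 𝓔) be a finite weighted hypergraph and let λ ≥ 0. Consider the minimization of Σ_{v∈V} x_v − λ · Σ_{e∈𝓔} w_e z_e over all x : V → [0,1] and z : 𝓔 → [0,1] satisfying z_e ≤ x_v for every e ∈ 𝓔 and every v ∈ e. Then the minimum is attained at a solution with x_v ∈ {0,1} for all v and z_e ∈ {0,1} for all e; in particular, the minimum value equals min_{K ⊆ V} (|K| − λ · e(K)). -/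
open Finset

/-!
Threshold rounding. For `t` in `(0, 1]` let `K_t = {v | t ≤ x v}`. The constraints `z e ≤ x v` put
every hyperedge with `t ≤ z e` inside `K_t`, so `K_t` does at least as well as the 0/1 point
obtained by thresholding `x` and `z` at `t`. The objective is linear, and the average over `t` of
the threshold of a number in `[0, 1]` is that number, so on average the thresholded points cost as
much as `(x, z)`, and some `K_t` costs no more.
-/

open MeasureTheory

/-- The rounding of `a` at level `t`, equal to `1` if `a` reaches `t` and to `0` otherwise. -/
noncomputable def threshold (t a : ℝ) : ℝ :=
  if t ≤ a then 1 else 0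

theorem threshold_eq_indicator_Iic (a : ℝ) :
    (threshold · a) = (Set.Iic a).indicator 1 :=
  rfl

theorem integrableOn_threshold (a : ℝ) : IntegrableOn (threshold · a) (Set.Ioc 0 1) := by
  rw [threshold_eq_indicator_Iic]
  exact (integrable_const (1 : ℝ)).indicator measurableSet_Iic

theorem setIntegral_threshold (a : ℝ) :
    ∫ t in Set.Ioc 0 1, threshold t a = max (min 1 a) 0 := by
  rw [threshold_eq_indicator_Iic, integral_indicator_one measurableSet_Iic,
    measureReal_restrict_apply measurableSet_Iic, Set.inter_comm, Set.Ioc_inter_Iic,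
    Real.volume_real_Ioc, sub_zero]

section Objective

variable {V : Type*} [Fintype V]

/-- The objective of the Lagrangian relaxation at the point `(x, z)`, where `x` is indexed by the
vertices and only the values of `z` on the hyperedges `𝓔` matter. -/
noncomputable def lagrangianObjective (𝓔 : Finset (Finset V)) (w : Finset V → ℝ) (lam : ℝ)
    (x : V → ℝ) (z : Finset V → ℝ) : ℝ :=
  (∑ v, x v) - lam * ∑ e ∈ 𝓔, w e * z e

/-- The vertices at which the fractional solution `x` is at least `t`; rounding `x` at level `t`
selects this set. -/
noncomputable def superlevel (x : V → ℝ) (t : ℝ) : Finset V :=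
  {v | t ≤ x v}

variable {𝓔 : Finset (Finset V)} {w : Finset V → ℝ} {lam : ℝ}

theorem lagrangianObjective_le_lagrangianObjective (hw : ∀ e ∈ 𝓔, 0 ≤ w e) (hlam : 0 ≤ lam)
    {x x' : V → ℝ} {z z' : Finset V → ℝ} (hx : ∀ v, x v ≤ x' v) (hz : ∀ e ∈ 𝓔, z' e ≤ z e) :
    lagrangianObjective 𝓔 w lam x z ≤ lagrangianObjective 𝓔 w lam x' z' :=
  sub_le_sub (sum_le_sum fun v _ ↦ hx v) <| mul_le_mul_of_nonneg_left
    (sum_le_sum fun e he ↦ mul_le_mul_of_nonneg_left (hz e he) (hw e he)) hlam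

theorem lagrangianObjective_indicator [DecidableEq V] (K : Finset V) :
    lagrangianObjective 𝓔 w lam (fun v ↦ if v ∈ K then 1 else 0)
        (fun e ↦ if e ⊆ K then 1 else 0) =
      K.card - lam * inducedWeight 𝓔 w K := by
  simp [lagrangianObjective, inducedWeight, sum_filter]

theorem card_superlevel_sub_inducedWeight_le_lagrangianObjective_threshold [DecidableEq V]
    (hw : ∀ e ∈ 𝓔, 0 ≤ w e) (hlam : 0 ≤ lam) {x : V → ℝ} {z : Finset V → ℝ}
    (hzx : ∀ e ∈ 𝓔, ∀ v ∈ e, z e ≤ x v) (t : ℝ) :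
    (superlevel x t).card - lam * inducedWeight 𝓔 w (superlevel x t) ≤
      lagrangianObjective 𝓔 w lam (fun v ↦ threshold t (x v)) (fun e ↦ threshold t (z e)) := by
  rw [← lagrangianObjective_indicator]
  refine lagrangianObjective_le_lagrangianObjective hw hlam
    (fun v ↦ by simp [superlevel, threshold]) fun e he ↦ ?_
  have subset_of_le : t ≤ z e → e ⊆ superlevel x t := fun hte v hv ↦ by
    simpa [superlevel] using hte.trans (hzx e he v hv)
  unfold threshold
  split_ifs <;> simp_all

section Integral

variable {α : Type*} [MeasurableSpace α] {μ : Measure α} {x : α → V → ℝ} {z : α → Finset V → ℝ}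

theorem integrable_lagrangianObjective (hx : ∀ v, Integrable (x · v) μ)
    (hz : ∀ e ∈ 𝓔, Integrable (z · e) μ) :
    Integrable (fun t ↦ lagrangianObjective 𝓔 w lam (x t) (z t)) μ :=
  (integrable_finsetSum _ fun v _ ↦ hx v).sub <|
    (integrable_finsetSum _ fun e he ↦ (hz e he).const_mul (w e)).const_mul lam

theorem integral_lagrangianObjective (hx : ∀ v, Integrable (x · v) μ)
    (hz : ∀ e ∈ 𝓔, Integrable (z · e) μ) :
    ∫ t, lagrangianObjective 𝓔 w lam (x t) (z t) ∂μ =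
      lagrangianObjective 𝓔 w lam (fun v ↦ ∫ t, x t v ∂μ) (fun e ↦ ∫ t, z t e ∂μ) := by
  have hwz : ∀ e ∈ 𝓔, Integrable (fun t ↦ w e * z t e) μ := fun e he ↦ (hz e he).const_mul (w e)
  simp only [lagrangianObjective]
  rw [integral_sub (integrable_finsetSum _ fun v _ ↦ hx v)
      ((integrable_finsetSum _ hwz).const_mul lam),
    integral_const_mul, integral_finsetSum _ fun v _ ↦ hx v, integral_finsetSum _ hwz]
  simp only [integral_const_mul]

end Integral

theorem setIntegral_lagrangianObjective_threshold_le (hw : ∀ e ∈ 𝓔, 0 ≤ w e) (hlam : 0 ≤ lam)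
    {x : V → ℝ} {z : Finset V → ℝ} (hx : ∀ v, 0 ≤ x v) (hz : ∀ e ∈ 𝓔, z e ≤ 1) :
    ∫ t in Set.Ioc 0 1,
        lagrangianObjective 𝓔 w lam (fun v ↦ threshold t (x v)) (fun e ↦ threshold t (z e)) ≤
      lagrangianObjective 𝓔 w lam x z := by
  rw [integral_lagrangianObjective (fun v ↦ integrableOn_threshold (x v))
    fun e _ ↦ integrableOn_threshold (z e)]
  simp only [setIntegral_threshold]
  exact lagrangianObjective_le_lagrangianObjective hw hlam
    (fun v ↦ max_le (min_le_right _ _) (hx v))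
    fun e he ↦ (le_min (hz e he) le_rfl).trans (le_max_left _ _)

theorem exists_superlevel_le_lagrangianObjective [DecidableEq V] (hw : ∀ e ∈ 𝓔, 0 ≤ w e)
    (hlam : 0 ≤ lam) {x : V → ℝ} {z : Finset V → ℝ} (hx : ∀ v, 0 ≤ x v)
    (hz : ∀ e ∈ 𝓔, z e ≤ 1) (hzx : ∀ e ∈ 𝓔, ∀ v ∈ e, z e ≤ x v) :
    ∃ t ∈ Set.Ioc (0 : ℝ) 1,
      (superlevel x t).card - lam * inducedWeight 𝓔 w (superlevel x t) ≤
        lagrangianObjective 𝓔 w lam x z := by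
  obtain ⟨t, ht, le_average⟩ := exists_le_setAverage (μ := volume) (s := Set.Ioc (0 : ℝ) 1)
    (by simp) (by simp) <| integrable_lagrangianObjective (𝓔 := 𝓔) (w := w) (lam := lam)
      (fun v ↦ integrableOn_threshold (x v)) fun e _ ↦ integrableOn_threshold (z e)
  have average_eq_integral (f : ℝ → ℝ) :
      ⨍ t in Set.Ioc 0 1, f t = ∫ t in Set.Ioc 0 1, f t := by
    simp [setAverage_eq]
  refine ⟨t, ht, ?_⟩
  calc ((superlevel x t).card : ℝ) - lam * inducedWeight 𝓔 w (superlevel x t)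
    _ ≤ lagrangianObjective 𝓔 w lam (fun v ↦ threshold t (x v)) (fun e ↦ threshold t (z e)) :=
      card_superlevel_sub_inducedWeight_le_lagrangianObjective_threshold hw hlam hzx t
    _ ≤ ∫ t in Set.Ioc 0 1,
          lagrangianObjective 𝓔 w lam (fun v ↦ threshold t (x v)) (fun e ↦ threshold t (z e)) :=
      le_average.trans_eq (average_eq_integral _)
    _ ≤ lagrangianObjective 𝓔 w lam x z :=
      setIntegral_lagrangianObjective_threshold_le hw hlam hx hz

end Objective

/-- integrality of the Lagrangian relaxation (Lemma 4 /
`charikar2000greedy`): the Lagrangian LP attains its minimum at a 0/1 solution,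
and the minimum value is `min_{K ⊆ V} (|K| - λ·e(K))`. -/
theorem lagrangian_integrality {V : Type*} [Fintype V] [DecidableEq V]
    (𝓔 : Finset (Finset V)) (w : Finset V → ℝ) (hw : ∀ e ∈ 𝓔, 0 ≤ w e)
    (lam : ℝ) (hlam : 0 ≤ lam) :
    ∃ K : Finset V,
      -- the integral solution given by the indicators of `K` has objective
      -- value `|K| - λ·e(K)` ...
      ((∑ v, (if v ∈ K then (1:ℝ) else 0)) -
          lam * ∑ e ∈ 𝓔, w e * (if e ⊆ K then (1:ℝ) else 0)
        = (K.card : ℝ) - lam * inducedWeight 𝓔 w K) ∧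
      -- ... this value is a lower bound on the objective of every feasible
      -- fractional solution (hence the minimum is attained at the 0/1 point) ...
      (∀ (x : V → ℝ) (z : Finset V → ℝ),
        (∀ v, x v ∈ Set.Icc (0:ℝ) 1) →
        (∀ e ∈ 𝓔, z e ∈ Set.Icc (0:ℝ) 1) →
        (∀ e ∈ 𝓔, ∀ v ∈ e, z e ≤ x v) →
        (K.card : ℝ) - lam * inducedWeight 𝓔 w K ≤
          (∑ v, x v) - lam * ∑ e ∈ 𝓔, w e * z e) ∧
      -- ... and `K` minimizes `|K'| - λ·e(K')` over all subsets `K' ⊆ V`.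
      (∀ K' : Finset V,
        (K.card : ℝ) - lam * inducedWeight 𝓔 w K ≤
          (K'.card : ℝ) - lam * inducedWeight 𝓔 w K') := by
  obtain ⟨K, K_minimal⟩ := Finite.exists_min
    fun K : Finset V ↦ (K.card : ℝ) - lam * inducedWeight 𝓔 w K
  refine ⟨K, lagrangianObjective_indicator K, fun x z hx hz hzx ↦ ?_, K_minimal⟩
  obtain ⟨t, -, superlevel_le⟩ := exists_superlevel_le_lagrangianObjective hw hlam
    (fun v ↦ (hx v).1) (fun e he ↦ (hz e he).2) hzx
  exact (K_minimal (superlevel x t)).trans superlevel_le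
end

section
/- Let H = (V, 𝓔) be a finite weighted hypergraph and for λ ≥ 0 and K ⊆ V define Φ(K, λ) = |K| − λ · e(K). Then for any 0 ≤ λ₁ < λ₂ there exist sets K₁, K₂ ⊆ V such that K₁ minimizes Φ(·, λ₁) over all subsets of V, K₂ minimizes Φ(·, λ₂) over all subsets of V, and K₁ ⊆ K₂. -/
open Finset

/-- The Lagrangian objective `Φ(K, λ) = |K| - λ·e(K)`. -/
noncomputable def lagObj {V : Type*} [DecidableEq V]
    (𝓔 : Finset (Finset V)) (w : Finset V → ℝ) (K : Finset V) (lam : ℝ) : ℝ :=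
  (K.card : ℝ) - lam * inducedWeight 𝓔 w K

/-!
If `A` minimizes `Φ(·, lam₁)` and `B` minimizes `Φ(·, lam₂)`, with `lam₁ ≤ lam₂` and `0 ≤ lam₂`,
then supermodularity and monotonicity of the induced weight give the exchange inequality
`Φ(A ∪ B, lam₂) + Φ(A ∩ B, lam₁) ≤ Φ(A, lam₁) + Φ(B, lam₂)`, so `A ∩ B` also minimizes `Φ(·, lam₁)`.
Hence an inclusion-minimal minimizer at `lam₁` lies in every minimizer at `lam₂`; for `lam₂ < 0`
this holds because `∅` is a minimizer at `lam₁`. Choosing an inclusion-minimal minimizer for each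
parameter yields a single nested family.
-/

section

variable {V : Type*} [DecidableEq V] {𝓔 : Finset (Finset V)} {w : Finset V → ℝ}
  {lam lam₁ lam₂ : ℝ}

lemma inducedWeight_mono (hw : ∀ e ∈ 𝓔, 0 ≤ w e) : Monotone (inducedWeight 𝓔 w) := by
  intro A B hAB
  refine sum_le_sum_of_subset_of_nonneg ?_ fun e he _ => hw e (mem_of_mem_filter e he)
  exact monotone_filter_right 𝓔 fun _ _ heA => heA.trans hAB

lemma inducedWeight_add_le_union_add_inter (hw : ∀ e ∈ 𝓔, 0 ≤ w e) (A B : Finset V) :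
    inducedWeight 𝓔 w A + inducedWeight 𝓔 w B ≤
      inducedWeight 𝓔 w (A ∪ B) + inducedWeight 𝓔 w (A ∩ B) := by
  have edges_inter : 𝓔.filter (· ⊆ A) ∩ 𝓔.filter (· ⊆ B) = 𝓔.filter (· ⊆ A ∩ B) := by
    simp only [← filter_and, subset_inter_iff]
  have edges_union : 𝓔.filter (· ⊆ A) ∪ 𝓔.filter (· ⊆ B) ⊆ 𝓔.filter (· ⊆ A ∪ B) :=
    union_subset (monotone_filter_right 𝓔 fun _ _ heA => heA.trans subset_union_left)
      (monotone_filter_right 𝓔 fun _ _ heB => heB.trans subset_union_right)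
  calc inducedWeight 𝓔 w A + inducedWeight 𝓔 w B
      = ∑ e ∈ 𝓔.filter (· ⊆ A) ∪ 𝓔.filter (· ⊆ B), w e + inducedWeight 𝓔 w (A ∩ B) := by
        simp only [inducedWeight, ← edges_inter, sum_union_inter]
    _ ≤ inducedWeight 𝓔 w (A ∪ B) + inducedWeight 𝓔 w (A ∩ B) := by
        gcongr
        exact sum_le_sum_of_subset_of_nonneg edges_union
          fun e he _ => hw e (mem_of_mem_filter e he)

lemma inducedWeight_inter_biUnion (K : Finset V) :
    inducedWeight 𝓔 w (K ∩ 𝓔.biUnion id) = inducedWeight 𝓔 w K := by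
  refine sum_congr (filter_congr fun e he => ?_) fun _ _ => rfl
  have e_subset_biUnion : e ⊆ 𝓔.biUnion id := subset_biUnion_of_mem id he
  simp only [subset_inter_iff, e_subset_biUnion, and_true]

lemma lagObj_union_add_lagObj_inter_le (hw : ∀ e ∈ 𝓔, 0 ≤ w e) (h₂ : 0 ≤ lam₂)
    (h₁₂ : lam₁ ≤ lam₂) (A B : Finset V) :
    lagObj 𝓔 w (A ∪ B) lam₂ + lagObj 𝓔 w (A ∩ B) lam₁ ≤
      lagObj 𝓔 w A lam₁ + lagObj 𝓔 w B lam₂ := by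
  have card_modular : (#(A ∪ B) : ℝ) + #(A ∩ B) = #A + #B :=
    mod_cast card_union_add_card_inter A B
  have weight_supermodular :=
    mul_le_mul_of_nonneg_left (inducedWeight_add_le_union_add_inter hw A B) h₂
  have weight_mono :=
    mul_le_mul_of_nonneg_left (inducedWeight_mono hw (inter_subset_left : A ∩ B ⊆ A))
      (sub_nonneg.2 h₁₂)
  simp only [lagObj]
  linarith

lemma lagObj_inter_biUnion_le (K : Finset V) (lam : ℝ) :
    lagObj 𝓔 w (K ∩ 𝓔.biUnion id) lam ≤ lagObj 𝓔 w K lam := by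
  simp only [lagObj, inducedWeight_inter_biUnion]
  gcongr
  exact inter_subset_left

variable (𝓔 w) in
/-- `K` minimizes `Φ(·, lam)` among all finite vertex sets. For infinite `V` minimizers
still exist, because intersecting with the union of the hyperedges never increases `Φ`. -/
def IsLagMinimizer (lam : ℝ) (K : Finset V) : Prop :=
  ∀ L : Finset V, lagObj 𝓔 w K lam ≤ lagObj 𝓔 w L lam

variable (𝓔 w) in
lemma exists_isLagMinimizer (lam : ℝ) : ∃ K, IsLagMinimizer 𝓔 w lam K := by
  obtain ⟨K, -, K_le⟩ :=
    exists_min_image (𝓔.biUnion id).powerset (lagObj 𝓔 w · lam) (powerset_nonempty _)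
  exact ⟨K, fun L => (K_le _ (mem_powerset.2 inter_subset_right)).trans
    (lagObj_inter_biUnion_le L lam)⟩

lemma isLagMinimizer_empty (hw : ∀ e ∈ 𝓔, 0 ≤ w e) (hlam : lam ≤ 0) :
    IsLagMinimizer 𝓔 w lam ∅ := by
  intro L
  have card_le : (#(∅ : Finset V) : ℝ) ≤ #L := mod_cast card_le_card (empty_subset L)
  exact sub_le_sub card_le
    (mul_le_mul_of_nonpos_left (inducedWeight_mono hw (empty_subset L)) hlam)

lemma IsLagMinimizer.inter {A B : Finset V} (hA : IsLagMinimizer 𝓔 w lam₁ A)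
    (hB : IsLagMinimizer 𝓔 w lam₂ B) (hw : ∀ e ∈ 𝓔, 0 ≤ w e) (h₂ : 0 ≤ lam₂)
    (h₁₂ : lam₁ ≤ lam₂) : IsLagMinimizer 𝓔 w lam₁ (A ∩ B) := by
  intro L
  have exchange := lagObj_union_add_lagObj_inter_le hw h₂ h₁₂ A B
  linarith [hA L, hB (A ∪ B)]

lemma IsLagMinimizer.subset_of_minimal {A B : Finset V} (hB : IsLagMinimizer 𝓔 w lam₂ B)
    (hA : Minimal (IsLagMinimizer 𝓔 w lam₁) A) (hw : ∀ e ∈ 𝓔, 0 ≤ w e)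
    (h₁₂ : lam₁ ≤ lam₂) : A ⊆ B := by
  rcases le_total 0 lam₂ with h₂ | h₂
  · have A_subset_inter : A ⊆ A ∩ B :=
      hA.le_of_le (hA.prop.inter hB hw h₂ h₁₂) inter_subset_left
    exact A_subset_inter.trans inter_subset_right
  · have A_subset_empty : A ⊆ ∅ :=
      hA.le_of_le (isLagMinimizer_empty hw (h₁₂.trans h₂)) (empty_subset A)
    exact A_subset_empty.trans (empty_subset B)

theorem nested_lagrangian_minimizers_general (hw : ∀ e ∈ 𝓔, 0 ≤ w e) :
    ∃ K : ℝ → Finset V, Monotone K ∧ ∀ lam, IsLagMinimizer 𝓔 w lam (K lam) := by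
  choose K K_minimal using fun lam =>
    exists_minimal_of_wellFoundedLT _ (exists_isLagMinimizer 𝓔 w lam)
  exact ⟨K, fun _ lam₂ h₁₂ => (K_minimal lam₂).prop.subset_of_minimal (K_minimal _) hw h₁₂,
    fun lam => (K_minimal lam).prop⟩

end

/-- nestedness of Lagrangian minimizers (Lemma "Nested Solutions"). -/
theorem nested_lagrangian_minimizers {V : Type*} [Fintype V] [DecidableEq V]
    (𝓔 : Finset (Finset V)) (w : Finset V → ℝ) (hw : ∀ e ∈ 𝓔, 0 ≤ w e)
    (lam₁ lam₂ : ℝ) (h₁ : 0 ≤ lam₁) (h₁₂ : lam₁ < lam₂) :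
    ∃ K₁ K₂ : Finset V,
      (∀ K : Finset V, lagObj 𝓔 w K₁ lam₁ ≤ lagObj 𝓔 w K lam₁) ∧
      (∀ K : Finset V, lagObj 𝓔 w K₂ lam₂ ≤ lagObj 𝓔 w K lam₂) ∧
      K₁ ⊆ K₂ := by
  obtain ⟨K, K_mono, K_min⟩ := nested_lagrangian_minimizers_general hw
  exact ⟨K lam₁, K lam₂, K_min lam₁, K_min lam₂, K_mono h₁₂.le⟩
end

section
/- Let X₁, …, X_{n+1} be exchangeable real-valued random variables on a probability space, let φ ∈ (0,1), and set k = ⌈φ(n+1)⌉. Assume k ≤ n and let Q be the k-th smallest value among X₁, …, X_n. Then ℙ(X_{n+1} ≤ Q) ≥ φ. -/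
open MeasureTheory

/-- The `k`-th smallest value among `a 0, …, a (n-1)` (the `k`-th order
statistic, for `1 ≤ k ≤ n`): the least `q` such that at least `k` of the
values are `≤ q`. -/
noncomputable def kthSmallest {n : ℕ} {α : Type*} [ConditionallyCompleteLinearOrder α]
    (a : Fin n → α) (k : ℕ) : α :=
  sInf {q : α | k ≤ (Finset.univ.filter (fun i => a i ≤ q)).card}

/-!
Call the strict rank of the `j`-th entry of a tuple the number of entries strictly below it. In any
tuple of length at least `k`, ties or not, at least `k` entries have strict rank below `k`, so
integrating the number of such entries gives `k ≤ ∑ j, ℙ(strict rank of X j < k)`. By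
exchangeability the `n + 1` summands agree, whence `k / (n + 1) ≤ ℙ(strict rank of X_{n+1} < k)`;
and if fewer than `k` entries lie strictly below `X_{n+1}`, then `X_{n+1} ≤ Q`.
-/

open Finset

/-- The number of entries of the tuple `x` that are strictly below its `j`-th entry. Tied entries
share a strict rank, and the least entries have strict rank `0`. -/
def strictRank {ι α : Type*} [Fintype ι] [LinearOrder α] (x : ι → α) (j : ι) : ℕ :=
  #{i | x i < x j}

section StrictRank

variable {ι α : Type*} [Fintype ι] [LinearOrder α]

lemma strictRank_comp_equiv {κ : Type*} [Fintype κ] (x : ι → α) (σ : κ ≃ ι) (j : κ) :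
    strictRank (x ∘ σ) j = strictRank x (σ j) :=
  card_equiv σ (by simp)

lemma strictRank_last {n : ℕ} (x : Fin (n + 1) → α) :
    strictRank x (Fin.last n) = #{i : Fin n | x i.castSucc < x (Fin.last n)} := by
  simp only [strictRank, card_filter, Fin.sum_univ_castSucc, lt_irrefl, if_false, add_zero]

lemma le_card_strictRank_lt (x : ι → α) {k : ℕ} (hk : k ≤ Fintype.card ι) :
    k ≤ #{j | strictRank x j < k} := by
  by_contra! hlt
  have hne : ({j | k ≤ strictRank x j} : Finset ι).Nonempty := by
    by_contra! hempty
    have hall : ∀ j, strictRank x j < k := by simpa [filter_eq_empty_iff] using hempty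
    simp only [hall, filter_true, card_univ] at hlt
    exact hlt.not_ge hk
  -- Entries below the least entry `x j` of rank at least `k` have rank below `k`: too few of them.
  obtain ⟨j, hj, hmin⟩ := exists_min_image _ x hne
  have hsub : ({i | x i < x j} : Finset ι) ⊆
      ({i | strictRank x i < k} : Finset ι) := fun i hi => by
    have hij : x i < x j := by simpa using hi
    by_contra hi'
    exact hij.not_ge (hmin i (by simpa using hi'))
  have hjk : k ≤ strictRank x j := by simpa using hj
  exact (hjk.trans (card_le_card hsub)).not_gt hlt

lemma measurable_strictRank [TopologicalSpace α] [OrderClosedTopology α]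
    [SecondCountableTopology α] [MeasurableSpace α] [OpensMeasurableSpace α] (j : ι) :
    Measurable fun x : ι → α => strictRank x j := by
  simp only [strictRank, card_filter]
  exact Finset.measurable_sum _ fun i _ => Measurable.ite
    (measurableSet_lt (measurable_pi_apply i) (measurable_pi_apply j))
    measurable_const measurable_const

end StrictRank

lemma le_kthSmallest {α : Type*} [ConditionallyCompleteLinearOrder α] {n k : ℕ} {a : Fin n → α}
    {y : α} (hkn : k ≤ n) (hy : #{i | a i < y} < k) : y ≤ kthSmallest a k := by
  refine le_csInf ?_ fun q (hq : k ≤ #{i | a i ≤ q}) => ?_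
  · have : Nonempty α := ⟨y⟩
    obtain ⟨M, hM⟩ := (Set.finite_range a).bddAbove
    have hall : ∀ i, a i ≤ M := fun i => hM ⟨i, rfl⟩
    exact ⟨M, by simpa [hall] using hkn⟩
  · by_contra! hqy
    have hsub : #{i | a i ≤ q} ≤ #{i | a i < y} :=
      card_le_card (monotone_filter_right _ fun _ _ hi => hi.trans_lt hqy)
    exact (hq.trans hsub).not_gt hy

section Measure

variable {Ω ι α : Type*} [MeasurableSpace Ω] [Fintype ι] {μ : Measure Ω}

lemma natCast_mul_measure_univ_le_sum_measure {E : ι → Set Ω} (hE : ∀ j, NullMeasurableSet (E j) μ)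
    [∀ ω, DecidablePred fun j => ω ∈ E j] {k : ℕ} (hk : ∀ ω, k ≤ #{j | ω ∈ E j}) :
    k * μ Set.univ ≤ ∑ j, μ (E j) := by
  have hcount : ∀ ω, (k : ENNReal) ≤ ∑ j, (E j).indicator 1 ω := fun ω => by
    simpa [Set.indicator_apply] using hk ω
  calc k * μ Set.univ = ∫⁻ _, k ∂μ := (lintegral_const _).symm
    _ ≤ ∫⁻ ω, ∑ j, (E j).indicator 1 ω ∂μ := lintegral_mono hcount
    _ = ∑ j, ∫⁻ ω, (E j).indicator 1 ω ∂μ :=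
      lintegral_finsetSum' _ fun j _ => aemeasurable_one.indicator₀ (hE j)
    _ = ∑ j, μ (E j) := sum_congr rfl fun j _ => lintegral_indicator_one₀ (hE j)

/-- Exchangeability of the family `X` under `μ`: the joint law is invariant under permutations of
the indices. As `Measure.map` is `0` along a function that is not a.e. measurable, this is only
meaningful when every `X i` is a.e. measurable. -/
def Exchangeable [MeasurableSpace α] (X : ι → Ω → α) (μ : Measure Ω) : Prop :=
  ∀ σ : Equiv.Perm ι, μ.map (fun ω i => X (σ i) ω) = μ.map fun ω i => X i ω

namespace Exchangeable

variable [LinearOrder α] [TopologicalSpace α] [OrderClosedTopology α] [SecondCountableTopology α]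
  [MeasurableSpace α] [OpensMeasurableSpace α] {X : ι → Ω → α}

lemma measure_strictRank_lt_eq (h : Exchangeable X μ) (hX : ∀ i, AEMeasurable (X i) μ) (k : ℕ)
    (i j : ι) :
    μ {ω | strictRank (X · ω) i < k} = μ {ω | strictRank (X · ω) j < k} := by
  classical
  let σ : Equiv.Perm ι := Equiv.swap i j
  have hmeas : MeasurableSet {x : ι → α | strictRank x j < k} :=
    measurable_strictRank j measurableSet_Iio
  have hσ : ∀ ω, strictRank (fun l => X (σ l) ω) j = strictRank (X · ω) i := fun ω => by
    simpa [σ, Function.comp_def] using strictRank_comp_equiv (X · ω) σ j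
  calc μ {ω | strictRank (X · ω) i < k}
      = μ.map (fun ω l => X (σ l) ω) {x | strictRank x j < k} := by
        rw [Measure.map_apply_of_aemeasurable (aemeasurable_pi_lambda _ fun l => hX (σ l)) hmeas]
        simp only [Set.preimage_ofPred_eq, hσ]
    _ = μ.map (fun ω l => X l ω) {x | strictRank x j < k} := by rw [h σ]
    _ = μ {ω | strictRank (X · ω) j < k} :=
        Measure.map_apply_of_aemeasurable (aemeasurable_pi_lambda _ hX) hmeas

lemma natCast_mul_measure_univ_le_card_mul_measure_strictRank_lt (h : Exchangeable X μ)
    (hX : ∀ i, AEMeasurable (X i) μ) {k : ℕ} (hk : k ≤ Fintype.card ι) (j : ι) :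
    k * μ Set.univ ≤ Fintype.card ι * μ {ω | strictRank (X · ω) j < k} := by
  have hnull : ∀ i, NullMeasurableSet {ω | strictRank (X · ω) i < k} μ := fun i =>
    (aemeasurable_pi_lambda _ hX).nullMeasurableSet_preimage
      (measurable_strictRank i measurableSet_Iio)
  calc k * μ Set.univ ≤ ∑ i, μ {ω | strictRank (X · ω) i < k} :=
        natCast_mul_measure_univ_le_sum_measure hnull fun ω => le_card_strictRank_lt (X · ω) hk
    _ = ∑ _i : ι, μ {ω | strictRank (X · ω) j < k} :=
        sum_congr rfl fun i _ => h.measure_strictRank_lt_eq hX k i j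
    _ = Fintype.card ι * μ {ω | strictRank (X · ω) j < k} := by simp

end Exchangeable

end Measure

theorem conformal_quantile_general {Ω α : Type*} [MeasurableSpace Ω]
    [ConditionallyCompleteLinearOrder α] [TopologicalSpace α] [OrderClosedTopology α]
    [SecondCountableTopology α] [MeasurableSpace α] [OpensMeasurableSpace α]
    (μ : Measure Ω) {n : ℕ} {X : Fin (n + 1) → Ω → α} (hX : ∀ i, AEMeasurable (X i) μ)
    (hexch : Exchangeable X μ) (φ : ℝ) {k : ℕ} (hk : φ * (n + 1) ≤ k) (hkn : k ≤ n) :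
    ENNReal.ofReal φ * μ Set.univ ≤
      μ {ω | X (Fin.last n) ω ≤ kthSmallest (fun i : Fin n => X i.castSucc ω) k} := by
  have hφ : ENNReal.ofReal φ * (n + 1 : ℕ) ≤ k := by
    rw [← ENNReal.ofReal_natCast, ← ENNReal.ofReal_mul' (Nat.cast_nonneg _),
      ← ENNReal.ofReal_natCast k]
    exact ENNReal.ofReal_le_ofReal (by exact_mod_cast hk)
  have hrank : {ω | strictRank (X · ω) (Fin.last n) < k} ⊆
      {ω | X (Fin.last n) ω ≤ kthSmallest (fun i : Fin n => X i.castSucc ω) k} :=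
    fun ω hω => le_kthSmallest hkn (strictRank_last (X · ω) ▸ hω)
  have hcard : k ≤ Fintype.card (Fin (n + 1)) := by simpa using hkn.trans n.le_succ
  refine le_trans ?_ (measure_mono hrank)
  rw [← ENNReal.mul_le_mul_iff_right (a := (n + 1 : ℕ)) (by simp) (ENNReal.natCast_ne_top _)]
  calc ((n + 1 : ℕ) : ENNReal) * (ENNReal.ofReal φ * μ Set.univ)
      = ENNReal.ofReal φ * (n + 1 : ℕ) * μ Set.univ := by ring
    _ ≤ k * μ Set.univ := by gcongr
    _ ≤ (n + 1 : ℕ) * μ {ω | strictRank (X · ω) (Fin.last n) < k} := by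
        simpa only [Fintype.card_fin] using
          hexch.natCast_mul_measure_univ_le_card_mul_measure_strictRank_lt hX hcard (Fin.last n)

/-- the split conformal quantile lemma. If `X₁, …, X_{n+1}` are
exchangeable real random variables, `φ ∈ (0,1)`, `k = ⌈φ(n+1)⌉ ≤ n`, and `Q`
is the `k`-th smallest among `X₁, …, X_n`, then `ℙ(X_{n+1} ≤ Q) ≥ φ`. -/
theorem conformal_quantile {Ω : Type*} [MeasurableSpace Ω]
    (ℙ : Measure Ω) [IsProbabilityMeasure ℙ]
    (n : ℕ) (X : Fin (n + 1) → Ω → ℝ) (hmeas : ∀ i, Measurable (X i))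
    (hexch : ∀ σ : Equiv.Perm (Fin (n + 1)),
      Measure.map (fun ω => fun i => X (σ i) ω) ℙ =
        Measure.map (fun ω => fun i => X i ω) ℙ)
    (φ : ℝ) (hφ : φ ∈ Set.Ioo (0:ℝ) 1)
    (k : ℕ) (hk : k = ⌈φ * (n + 1)⌉₊) (hkn : k ≤ n) :
    ENNReal.ofReal φ ≤
      ℙ {ω | X (Fin.last n) ω ≤
        kthSmallest (fun i : Fin n => X i.castSucc ω) k} := by
  simpa using conformal_quantile_general ℙ (fun i => (hmeas i).aemeasurable) hexch φ
    (hk ▸ Nat.le_ceil _) hkn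
end

section
/- Let H = (V, 𝓔) be a finite weighted hypergraph with total weight W > 0, and for λ ≥ 0 define L(λ) = min_{K ⊆ V} (|K| − λ · e(K)). Then L is a concave, piecewise-linear, nonincreasing function of λ on [0, ∞), and for every τ ∈ [0,1] with ε = 1 − τ, the optimal value of the conformal-subgraph LP at coverage parameter ε equals max_{λ ≥ 0} ( L(λ) + λ·τ·W ), and this maximum is attained at some λ* ≥ 0. -/
open Finset

/-- The Lagrangian dual function `L(λ) = min_{K ⊆ V} (|K| - λ·e(K))`. -/
noncomputable def lagDual {V : Type*} [Fintype V] [DecidableEq V]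
    (𝓔 : Finset (Finset V)) (w : Finset V → ℝ) (lam : ℝ) : ℝ :=
  ⨅ K : Finset V, ((K.card : ℝ) - lam * inducedWeight 𝓔 w K)

/-!
Each `K ⊆ V` gives an integral LP point `(1_K, 1_{· ⊆ K})`, its induced point.

Weak duality is threshold rounding: for a fractional point `(x, z)` and `t` uniform in `[0, 1]`,
the set `K_t = {v | t ≤ x v}` has expected size `∑ v, x v`, and it contains every hyperedge with
`t ≤ z e`, so its expected induced weight is at least `∑ e, w e * z e`.

For strong duality, let `P` be the LP value. A mixture of two induced points that meets the coverage
constraint is feasible, hence costs at least `P`. In one dimension this pairwise information is all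
that is needed: by Helly's theorem the intervals `{lam ≥ 0 | P ≤ |K| + lam * (τ W - e(K))}` have a
common point as soon as any two of them meet, and a common point is an optimal multiplier.
-/

section FiniteFamilies

theorem concaveOn_ciInf {ι E : Type*} [Nonempty ι] [AddCommMonoid E] [Module ℝ E] {s : Set E}
    {f : ι → E → ℝ} (hf : ∀ i, ConcaveOn ℝ s (f i))
    (hbdd : ∀ x ∈ s, BddBelow (Set.range fun i => f i x)) :
    ConcaveOn ℝ s fun x => ⨅ i, f i x := by
  refine ⟨(hf (Classical.arbitrary ι)).1, fun x hx y hy a b ha hb hab => le_ciInf fun i => ?_⟩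
  calc a • (⨅ i, f i x) + b • (⨅ i, f i y)
      ≤ a • f i x + b • f i y := by
        gcongr
        · exact ciInf_le (hbdd x hx) i
        · exact ciInf_le (hbdd y hy) i
    _ ≤ f i (a • x + b • y) := (hf i).2 hx hy ha hb hab

theorem nonempty_iInter_of_pairwise_inter_nonempty {𝕜 ι : Type*} [Field 𝕜] [LinearOrder 𝕜]
    [IsStrictOrderedRing 𝕜] [Finite ι] {F : ι → Set 𝕜} (hconv : ∀ i, Convex 𝕜 (F i))
    (hpair : ∀ i j, (F i ∩ F j).Nonempty) : (⋂ i, F i).Nonempty := by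
  classical
  have := Fintype.ofFinite ι
  suffices (⋂ i ∈ (univ : Finset ι), F i).Nonempty by simpa using this
  refine Convex.helly_theorem' (𝕜 := 𝕜) (fun i _ => hconv i) fun I _ hI => ?_
  rw [Module.finrank_self, one_add_one_eq_two] at hI
  rcases I.eq_empty_or_nonempty with rfl | ⟨i, hi⟩
  · simp
  · obtain ⟨j, hj⟩ : ∃ j, I ⊆ {i, j} := by
      have hcard : #(I.erase i) ≤ 1 := by rw [card_erase_of_mem hi]; omega
      have : Nonempty ι := ⟨i⟩
      obtain ⟨j, hj⟩ := card_le_one_iff_subset_singleton.1 hcard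
      exact ⟨j, (insert_erase hi).symm.subset.trans (insert_subset_insert i hj)⟩
    refine (hpair i j).mono fun t ht => Set.mem_iInter₂.2 fun k hk => ?_
    obtain rfl | rfl : k = i ∨ k = j := by simpa using hj hk
    exacts [ht.1, ht.2]

end FiniteFamilies

section Multiplier

theorem exists_nonneg_multiplier_pair {p n₁ c₁ n₂ c₂ : ℝ}
    (h : ∀ a b : ℝ, 0 ≤ a → 0 ≤ b → a + b = 1 → a * c₁ + b * c₂ ≤ 0 → p ≤ a * n₁ + b * n₂) :
    ∃ lam, 0 ≤ lam ∧ p ≤ n₁ + lam * c₁ ∧ p ≤ n₂ + lam * c₂ := by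
  wlog hc : c₁ ≤ c₂ generalizing n₁ c₁ n₂ c₂
  · obtain ⟨lam, hlam, h₂, h₁⟩ := this (n₁ := n₂) (n₂ := n₁) (fun a b ha hb hab hcov => by
      linarith [h b a hb ha (by linarith) (by linarith)]) (le_of_not_ge hc)
    exact ⟨lam, hlam, h₁, h₂⟩
  have le_of_pos {n c lam : ℝ} (hpos : 0 < c) (hlam : (p - n) / c ≤ lam) : p ≤ n + lam * c := by
    linarith [(div_le_iff₀ hpos).1 hlam]
  have left_le (h₁ : c₁ ≤ 0) : p ≤ n₁ := by simpa [h₁] using h 1 0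
  rcases le_or_gt c₂ 0 with h₂ | h₂
  · exact ⟨0, le_rfl, by simpa using left_le (hc.trans h₂), by simpa [h₂] using h 0 1⟩
  rcases lt_or_ge 0 c₁ with h₁ | h₁
  · exact ⟨max 0 (max ((p - n₁) / c₁) ((p - n₂) / c₂)), le_max_left _ _,
      le_of_pos h₁ (by simp), le_of_pos h₂ (by simp)⟩
  rcases le_total p n₂ with hn₂ | hn₂
  · exact ⟨0, le_rfl, by simpa using left_le h₁, by simpa using hn₂⟩
  have hgap : 0 < c₂ - c₁ := by linarith
  -- The mixture with `a * c₁ + b * c₂ = 0`.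
  have hmix : p ≤ c₂ / (c₂ - c₁) * n₁ + -c₁ / (c₂ - c₁) * n₂ :=
    h _ _ (by positivity) (div_nonneg (by linarith) hgap.le) (by field_simp; ring)
      (le_of_eq (by field_simp; ring))
  have hslack : n₁ + (p - n₂) / c₂ * c₁ - p =
      (c₂ - c₁) / c₂ * (c₂ / (c₂ - c₁) * n₁ + -c₁ / (c₂ - c₁) * n₂ - p) := by
    field_simp
    ring
  refine ⟨(p - n₂) / c₂, div_nonneg (by linarith) h₂.le, sub_nonneg.1 ?_, le_of_pos h₂ le_rfl⟩
  rw [hslack]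
  exact mul_nonneg (by positivity) (sub_nonneg.2 hmix)

theorem exists_nonneg_multiplier {ι : Type*} [Finite ι] {p : ℝ} {n c : ι → ℝ}
    (h : ∀ i j, ∀ a b : ℝ, 0 ≤ a → 0 ≤ b → a + b = 1 →
      a * c i + b * c j ≤ 0 → p ≤ a * n i + b * n j) :
    ∃ lam, 0 ≤ lam ∧ ∀ i, p ≤ n i + lam * c i := by
  rcases isEmpty_or_nonempty ι with _ | ⟨⟨i₀⟩⟩
  · exact ⟨0, le_rfl, isEmptyElim⟩
  have hconv (i : ι) : Convex ℝ {lam | 0 ≤ lam ∧ p ≤ n i + lam * c i} := by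
    rintro x ⟨hx, hpx⟩ y ⟨hy, hpy⟩ a b ha hb hab
    refine ⟨by positivity, ?_⟩
    simp only [smul_eq_mul]
    linear_combination a * hpx + b * hpy + (n i - p) * hab
  obtain ⟨lam, hlam⟩ := nonempty_iInter_of_pairwise_inter_nonempty hconv fun i j => by
    obtain ⟨lam, hlam, hi, hj⟩ := exists_nonneg_multiplier_pair (h i j)
    exact ⟨lam, ⟨hlam, hi⟩, hlam, hj⟩
  rw [Set.mem_iInter] at hlam
  exact ⟨lam, (hlam i₀).1, fun i => (hlam i).2⟩

end Multiplier

section Threshold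

theorem intervalIntegrable_threshold (y a b : ℝ) :
    IntervalIntegrable (fun t : ℝ => if t ≤ y then (1 : ℝ) else 0) MeasureTheory.volume a b := by
  refine Antitone.intervalIntegrable fun s t hst => ?_
  split_ifs with ht hs
  exacts [le_rfl, absurd (hst.trans ht) hs, zero_le_one, le_rfl]

theorem integral_threshold {y : ℝ} (hy : y ∈ Set.Icc (0 : ℝ) 1) :
    ∫ t in (0 : ℝ)..1, (if t ≤ y then (1 : ℝ) else 0) = y := by
  simpa [Set.indicator_apply] using
    intervalIntegral.integral_indicator (μ := MeasureTheory.volume) (f := fun _ => (1 : ℝ)) hy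

theorem le_sum_mul_of_forall_le_threshold_sum {ι : Type*} {s : Finset ι} {c y : ι → ℝ} {C : ℝ}
    (hy : ∀ i ∈ s, y i ∈ Set.Icc (0 : ℝ) 1)
    (hC : ∀ t ∈ Set.Icc (0 : ℝ) 1, C ≤ ∑ i ∈ s, c i * if t ≤ y i then 1 else 0) :
    C ≤ ∑ i ∈ s, c i * y i := by
  have hint (i : ι) : IntervalIntegrable (fun t : ℝ => c i * if t ≤ y i then 1 else 0)
      MeasureTheory.volume 0 1 := (intervalIntegrable_threshold (y i) 0 1).const_mul (c i)
  calc C = ∫ _ in (0 : ℝ)..1, C := by simp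
    _ ≤ ∫ t in (0 : ℝ)..1, ∑ i ∈ s, c i * if t ≤ y i then 1 else 0 :=
        intervalIntegral.integral_mono_on zero_le_one intervalIntegrable_const
          (by simpa only [sum_fn] using IntervalIntegrable.sum s fun i _ => hint i) hC
    _ = ∑ i ∈ s, c i * y i := by
        rw [intervalIntegral.integral_finsetSum fun i _ => hint i]
        refine sum_congr rfl fun i hi => ?_
        rw [intervalIntegral.integral_const_mul, integral_threshold (hy i hi)]

end Threshold

section Polytope

variable {V : Type*}

/-- The feasible region of the conformal-subgraph LP without its coverage constraint, as a set of
pairs `(x, z)`. The values of `z` outside `𝓔` are unconstrained, as in `LPFeasible`. -/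
def conformalPolytope (𝓔 : Finset (Finset V)) : Set ((V → ℝ) × (Finset V → ℝ)) :=
  {p | (∀ v, p.1 v ∈ Set.Icc (0 : ℝ) 1) ∧ (∀ e ∈ 𝓔, p.2 e ∈ Set.Icc (0 : ℝ) 1) ∧
    ∀ e ∈ 𝓔, ∀ v ∈ e, p.2 e ≤ p.1 v}

theorem convex_conformalPolytope (𝓔 : Finset (Finset V)) : Convex ℝ (conformalPolytope 𝓔) := by
  rintro p ⟨hpx, hpz, hpzx⟩ q ⟨hqx, hqz, hqzx⟩ a b ha hb hab
  refine ⟨fun v => convex_Icc 0 1 (hpx v) (hqx v) ha hb hab,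
    fun e he => convex_Icc 0 1 (hpz e he) (hqz e he) ha hb hab, fun e he v hv => ?_⟩
  exact add_le_add (mul_le_mul_of_nonneg_left (hpzx e he v hv) ha)
    (mul_le_mul_of_nonneg_left (hqzx e he v hv) hb)

variable [DecidableEq V]

/-- The integral LP point of a vertex set `K`: it selects the vertices of `K` and covers exactly
the hyperedges contained in `K`. -/
def inducedPoint (K : Finset V) : (V → ℝ) × (Finset V → ℝ) :=
  (fun v => if v ∈ K then 1 else 0, fun e => if e ⊆ K then 1 else 0)

theorem inducedPoint_mem_conformalPolytope (𝓔 : Finset (Finset V)) (K : Finset V) :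
    inducedPoint K ∈ conformalPolytope 𝓔 := by
  refine ⟨fun v => ?_, fun e _ => ?_, fun e _ v hv => ?_⟩ <;> dsimp only [inducedPoint]
  · split_ifs <;> simp
  · split_ifs <;> simp
  · split_ifs with heK hvK
    exacts [le_rfl, absurd (heK hv) hvK, zero_le_one, le_rfl]

theorem sum_inducedPoint_fst [Fintype V] (K : Finset V) : ∑ v, (inducedPoint K).1 v = #K := by
  simp [inducedPoint]

theorem sum_mul_inducedPoint_snd (𝓔 : Finset (Finset V)) (w : Finset V → ℝ) (K : Finset V) :
    ∑ e ∈ 𝓔, w e * (inducedPoint K).2 e = inducedWeight 𝓔 w K := by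
  simp [inducedPoint, inducedWeight, sum_filter]

end Polytope

section InducedWeight

variable {V : Type*} [DecidableEq V] {𝓔 : Finset (Finset V)} {w : Finset V → ℝ}

theorem inducedWeight_nonneg (hw : ∀ e ∈ 𝓔, 0 ≤ w e) (K : Finset V) : 0 ≤ inducedWeight 𝓔 w K :=
  sum_nonneg fun e he => hw e (mem_filter.1 he).1

theorem inducedWeight_univ [Fintype V] (𝓔 : Finset (Finset V)) (w : Finset V → ℝ) :
    inducedWeight 𝓔 w univ = totalWeight 𝓔 w := by
  simp [inducedWeight, totalWeight]

end InducedWeight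

section LagrangianDual

variable {V : Type*} [Fintype V] [DecidableEq V] {𝓔 : Finset (Finset V)} {w : Finset V → ℝ}

theorem lagDual_le (𝓔 : Finset (Finset V)) (w : Finset V → ℝ) (lam : ℝ) (K : Finset V) :
    lagDual 𝓔 w lam ≤ #K - lam * inducedWeight 𝓔 w K :=
  ciInf_le (Set.finite_range _).bddBelow K

theorem concaveOn_lagDual (𝓔 : Finset (Finset V)) (w : Finset V → ℝ) :
    ConcaveOn ℝ Set.univ (lagDual 𝓔 w) := by
  refine concaveOn_ciInf (fun K => ⟨convex_univ, fun x _ y _ a b _ _ hab => le_of_eq ?_⟩)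
    fun _ _ => (Set.finite_range _).bddBelow
  simp only [smul_eq_mul]
  linear_combination (#K : ℝ) * hab

theorem antitone_lagDual (hw : ∀ e ∈ 𝓔, 0 ≤ w e) : Antitone (lagDual 𝓔 w) := fun _ _ hle =>
  ciInf_mono (Set.finite_range _).bddBelow fun K =>
    sub_le_sub_left (mul_le_mul_of_nonneg_right hle (inducedWeight_nonneg hw K)) _

theorem exists_lagDual_eq_iInf_affine (𝓔 : Finset (Finset V)) (w : Finset V → ℝ) :
    ∃ (N : ℕ) (a b : Fin N → ℝ), 0 < N ∧ ∀ lam, lagDual 𝓔 w lam = ⨅ i, (a i * lam + b i) := by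
  let φ := (Fintype.equivFin (Finset V)).symm
  refine ⟨Fintype.card (Finset V), fun i => -inducedWeight 𝓔 w (φ i), fun i => #(φ i),
    Fintype.card_pos, fun lam => ?_⟩
  rw [lagDual, ← φ.iInf_comp]
  exact iInf_congr fun i => by ring

theorem lagDual_le_threshold {x : V → ℝ} {z : Finset V → ℝ} {lam : ℝ}
    (hw : ∀ e ∈ 𝓔, 0 ≤ w e) (hzx : ∀ e ∈ 𝓔, ∀ v ∈ e, z e ≤ x v) (hlam : 0 ≤ lam) (t : ℝ) :
    lagDual 𝓔 w lam ≤ (∑ v, if t ≤ x v then 1 else 0) -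
      lam * ∑ e ∈ 𝓔, w e * if t ≤ z e then 1 else 0 := by
  let K : Finset V := {v | t ≤ x v}
  have hcover (e : Finset V) (he : e ∈ 𝓔) (hte : t ≤ z e) : e ⊆ K := fun v hv =>
    mem_filter.2 ⟨mem_univ v, hte.trans (hzx e he v hv)⟩
  have hweight : ∑ e ∈ 𝓔, (w e * if t ≤ z e then 1 else 0) ≤ inducedWeight 𝓔 w K := by
    simp only [mul_ite, mul_one, mul_zero, ← sum_filter, inducedWeight]
    refine sum_le_sum_of_subset_of_nonneg (fun e he => ?_) fun e he _ => hw e (mem_filter.1 he).1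
    rw [mem_filter] at he ⊢
    exact ⟨he.1, hcover e he.1 he.2⟩
  calc lagDual 𝓔 w lam ≤ #K - lam * inducedWeight 𝓔 w K := lagDual_le 𝓔 w lam K
    _ ≤ _ := by rw [natCast_card_filter]; gcongr

theorem lagDual_le_of_mem_conformalPolytope {p : (V → ℝ) × (Finset V → ℝ)} {lam : ℝ}
    (hw : ∀ e ∈ 𝓔, 0 ≤ w e) (hp : p ∈ conformalPolytope 𝓔) (hlam : 0 ≤ lam) :
    lagDual 𝓔 w lam ≤ ∑ v, p.1 v - lam * ∑ e ∈ 𝓔, w e * p.2 e := by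
  obtain ⟨hx, hz, hzx⟩ := hp
  -- Vertices and hyperedges are rounded by one threshold, hence the single sum over `V ⊕ 𝓔`.
  have hround := le_sum_mul_of_forall_le_threshold_sum (s := univ.disjSum 𝓔)
    (c := Sum.elim 1 fun e => -(lam * w e)) (y := Sum.elim p.1 p.2) (C := lagDual 𝓔 w lam)
    (by simpa using ⟨hx, hz⟩) fun t _ => by
      simp only [sum_disjSum, Sum.elim_inl, Sum.elim_inr, Pi.one_apply, one_mul, neg_mul,
        sum_neg_distrib, mul_assoc, ← mul_sum, ← sub_eq_add_neg]
      exact lagDual_le_threshold hw hzx hlam t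
  simpa only [sum_disjSum, Sum.elim_inl, Sum.elim_inr, Pi.one_apply, one_mul, neg_mul,
    sum_neg_distrib, mul_assoc, ← mul_sum, ← sub_eq_add_neg] using hround

end LagrangianDual

section StrongDuality

variable {V : Type*} [Fintype V] [DecidableEq V] {𝓔 : Finset (Finset V)} {w : Finset V → ℝ}
  {ε lam : ℝ}

theorem lpFeasible_iff {p : (V → ℝ) × (Finset V → ℝ)} :
    LPFeasible 𝓔 w ε p.1 p.2 ↔
      p ∈ conformalPolytope 𝓔 ∧ (1 - ε) * totalWeight 𝓔 w ≤ ∑ e ∈ 𝓔, w e * p.2 e := by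
  simp only [LPFeasible, conformalPolytope, Set.mem_ofPred_eq, and_assoc]

theorem lpFeasible_inducedPoint_univ (hw : ∀ e ∈ 𝓔, 0 ≤ w e) (hε : 0 ≤ ε) :
    LPFeasible 𝓔 w ε (inducedPoint univ).1 (inducedPoint univ).2 := by
  refine lpFeasible_iff.2 ⟨inducedPoint_mem_conformalPolytope 𝓔 univ, ?_⟩
  rw [sum_mul_inducedPoint_snd, inducedWeight_univ]
  exact mul_le_of_le_one_left (sum_nonneg hw) (by linarith)

/-- The optimal value of the conformal-subgraph LP at coverage parameter `ε`, as an infimum. It has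
the junk value `0` when the LP is infeasible, which for nonnegative weights requires `ε < 0`. -/
noncomputable def conformalLPValue (𝓔 : Finset (Finset V)) (w : Finset V → ℝ) (ε : ℝ) : ℝ :=
  sInf {y : ℝ | ∃ (x : V → ℝ) (z : Finset V → ℝ), LPFeasible 𝓔 w ε x z ∧ y = ∑ v, x v}

theorem conformalLPValue_le {x : V → ℝ} {z : Finset V → ℝ} (h : LPFeasible 𝓔 w ε x z) :
    conformalLPValue 𝓔 w ε ≤ ∑ v, x v := by
  refine csInf_le ⟨0, ?_⟩ ⟨x, z, h, rfl⟩
  rintro _ ⟨x', z', h', rfl⟩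
  exact sum_nonneg fun v _ => (h'.1 v).1

theorem lagDual_add_le_conformalLPValue (hw : ∀ e ∈ 𝓔, 0 ≤ w e) (hε : 0 ≤ ε) (hlam : 0 ≤ lam) :
    lagDual 𝓔 w lam + lam * (1 - ε) * totalWeight 𝓔 w ≤ conformalLPValue 𝓔 w ε := by
  refine le_csInf ⟨_, _, _, lpFeasible_inducedPoint_univ hw hε, rfl⟩ ?_
  rintro _ ⟨x, z, hfeas, rfl⟩
  obtain ⟨hmem, hcov⟩ := lpFeasible_iff (p := (x, z)).1 hfeas
  linarith [lagDual_le_of_mem_conformalPolytope hw hmem hlam,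
    mul_le_mul_of_nonneg_left hcov hlam]

theorem conformalLPValue_le_mixture (K J : Finset V) {a b : ℝ} (ha : 0 ≤ a) (hb : 0 ≤ b)
    (hab : a + b = 1) (hcov : (1 - ε) * totalWeight 𝓔 w ≤
      a * inducedWeight 𝓔 w K + b * inducedWeight 𝓔 w J) :
    conformalLPValue 𝓔 w ε ≤ a * #K + b * #J := by
  let p := a • inducedPoint K + b • inducedPoint J
  have hmem : p ∈ conformalPolytope 𝓔 := convex_conformalPolytope 𝓔
    (inducedPoint_mem_conformalPolytope 𝓔 K) (inducedPoint_mem_conformalPolytope 𝓔 J) ha hb hab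
  have hcost : ∑ v, p.1 v = a * #K + b * #J := by
    simp [p, sum_add_distrib, ← mul_sum, sum_inducedPoint_fst]
  have hcoverage : ∑ e ∈ 𝓔, w e * p.2 e = a * inducedWeight 𝓔 w K + b * inducedWeight 𝓔 w J := by
    simp only [← sum_mul_inducedPoint_snd, mul_sum, ← sum_add_distrib]
    exact sum_congr rfl fun e _ => by simp [p]; ring
  exact hcost ▸ conformalLPValue_le (lpFeasible_iff.2 ⟨hmem, hcov.trans_eq hcoverage.symm⟩)

theorem exists_conformalLPValue_le_lagDual_add (𝓔 : Finset (Finset V)) (w : Finset V → ℝ) (ε : ℝ) :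
    ∃ lam, 0 ≤ lam ∧
      conformalLPValue 𝓔 w ε ≤ lagDual 𝓔 w lam + lam * (1 - ε) * totalWeight 𝓔 w := by
  obtain ⟨lam, hlam, hle⟩ := exists_nonneg_multiplier (ι := Finset V) (p := conformalLPValue 𝓔 w ε)
    (n := fun K => #K) (c := fun K => (1 - ε) * totalWeight 𝓔 w - inducedWeight 𝓔 w K)
    fun K J a b ha hb hab hcov => conformalLPValue_le_mixture K J ha hb hab (by
      linear_combination hcov - (1 - ε) * totalWeight 𝓔 w * hab)
  refine ⟨lam, hlam, sub_le_iff_le_add.1 (le_ciInf fun K => ?_)⟩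
  linarith [hle K]

theorem exists_optimal_multiplier (hw : ∀ e ∈ 𝓔, 0 ≤ w e) (hε : 0 ≤ ε) :
    ∃ lam, 0 ≤ lam ∧
      (∀ lam', 0 ≤ lam' → lagDual 𝓔 w lam' + lam' * (1 - ε) * totalWeight 𝓔 w ≤
        lagDual 𝓔 w lam + lam * (1 - ε) * totalWeight 𝓔 w) ∧
      conformalLPValue 𝓔 w ε = lagDual 𝓔 w lam + lam * (1 - ε) * totalWeight 𝓔 w := by
  obtain ⟨lam, hlam, hle⟩ := exists_conformalLPValue_le_lagDual_add 𝓔 w ε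
  exact ⟨lam, hlam, fun lam' hlam' => (lagDual_add_le_conformalLPValue hw hε hlam').trans hle,
    hle.antisymm (lagDual_add_le_conformalLPValue hw hε hlam)⟩

end StrongDuality

/-- the Lagrangian dual `L` is concave, piecewise-linear
(an infimum of finitely many affine functions) and nonincreasing on `[0,∞)`,
and strong duality holds: for every `τ ∈ [0,1]` the optimal LP value at
coverage `ε = 1 - τ` equals `max_{λ ≥ 0} (L(λ) + λτW)`, attained at some
`λ* ≥ 0`. -/
theorem lagrangian_dual_properties {V : Type*} [Fintype V] [DecidableEq V]
    (𝓔 : Finset (Finset V)) (w : Finset V → ℝ) (hw : ∀ e ∈ 𝓔, 0 ≤ w e)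
    (hW : 0 < totalWeight 𝓔 w) :
    ConcaveOn ℝ (Set.Ici 0) (lagDual 𝓔 w) ∧
    AntitoneOn (lagDual 𝓔 w) (Set.Ici 0) ∧
    (∃ (N : ℕ) (a b : Fin N → ℝ), 0 < N ∧
      ∀ lam ∈ Set.Ici (0:ℝ), lagDual 𝓔 w lam = ⨅ i, (a i * lam + b i)) ∧
    (∀ τ ∈ Set.Icc (0:ℝ) 1, ∃ lam : ℝ, 0 ≤ lam ∧
      (∀ lam' : ℝ, 0 ≤ lam' →
        lagDual 𝓔 w lam' + lam' * τ * totalWeight 𝓔 w ≤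
          lagDual 𝓔 w lam + lam * τ * totalWeight 𝓔 w) ∧
      sInf {y : ℝ | ∃ (x : V → ℝ) (z : Finset V → ℝ),
          LPFeasible 𝓔 w (1 - τ) x z ∧ y = ∑ v, x v} =
        lagDual 𝓔 w lam + lam * τ * totalWeight 𝓔 w) := by
  refine ⟨(concaveOn_lagDual 𝓔 w).subset (Set.subset_univ _) (convex_Ici 0),
    (antitone_lagDual hw).antitoneOn _, ?_, fun τ hτ => ?_⟩
  · obtain ⟨N, a, b, hN, heq⟩ := exists_lagDual_eq_iInf_affine 𝓔 w
    exact ⟨N, a, b, hN, fun lam _ => heq lam⟩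
  · simpa only [sub_sub_cancel, conformalLPValue] using
      exists_optimal_multiplier hw (sub_nonneg.2 hτ.2)
end

section
/- There exists a finite weighted hypergraph H = (V, 𝓔), arising from an s–t routing instance, and coverage targets τ₁ < τ₂ in (0,1), such that every minimum-cardinality vertex set K₁ ⊆ V with e(K₁) ≥ τ₁·W and every minimum-cardinality vertex set K₂ ⊆ V with e(K₂) ≥ τ₂·W satisfy K₁ ⊄ K₂; that is, the exact optimal solutions of the conformal subgraph problem are not monotone in the coverage target. In particular this holds for the instance with three disjoint hyperedges P₁, P₂, P₃ over a vertex set partitioned into |P₁| = 2, |P₂| = 2, |P₃| = 3 vertices, with weights w_{P₁} = 0.3, w_{P₂} = 0.3, w_{P₃} = 0.4, and τ₁ = 0.6, τ₂ = 0.7. -/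
open Finset

/-- `K` is an optimal (minimum-cardinality) solution of the conformal subgraph
problem at coverage target `τ`. -/
def IsOptimalCover {V : Type*} [DecidableEq V]
    (𝓔 : Finset (Finset V)) (w : Finset V → ℝ) (τ : ℝ) (K : Finset V) : Prop :=
  τ * totalWeight 𝓔 w ≤ inducedWeight 𝓔 w K ∧
  ∀ K' : Finset V, τ * totalWeight 𝓔 w ≤ inducedWeight 𝓔 w K' →
    K.card ≤ K'.card

/-- The three disjoint paths of Example `monotone`, as hyperedges on `Fin 7`:
`P₁ = {0,1}`, `P₂ = {2,3}`, `P₃ = {4,5,6}`. -/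
def P₁ : Finset (Fin 7) := {0, 1}
def P₂ : Finset (Fin 7) := {2, 3}
def P₃ : Finset (Fin 7) := {4, 5, 6}

/-- The weights: `w(P₁) = 0.3`, `w(P₂) = 0.3`, `w(P₃) = 0.4`. -/
noncomputable def exWeight : Finset (Fin 7) → ℝ := fun e =>
  if e = P₁ then 0.3 else if e = P₂ then 0.3 else if e = P₃ then 0.4 else 0

/-!
Take three disjoint hyperedges `A`, `B`, `C` with `A` and `B` smaller than `C`. If no single
hyperedge reaches the low target but `A` and `B` together do, every optimal solution at that target
contains `A ∪ B`. If `A` and `B` together miss the high target while `A` and `C` reach it, a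
solution at that target containing `A ∪ B` also contains `C`, hence is larger than `A ∪ C` and not
optimal.
-/

theorem card_add_card_le_of_disjoint {α : Type*} {s t u : Finset α} (hst : Disjoint s t)
    (hs : s ⊆ u) (ht : t ⊆ u) : #s + #t ≤ #u := by
  classical
  rw [← card_union_of_disjoint hst]
  exact card_le_card (union_subset hs ht)

section Hypergraph

variable {V : Type*} [DecidableEq V] {𝓔 S : Finset (Finset V)} {w : Finset V → ℝ} {τ : ℝ}
  {K A B C : Finset V}

theorem sum_le_inducedWeight (hw : ∀ e ∈ 𝓔, 0 ≤ w e) (hS : S ⊆ 𝓔) (hK : ∀ e ∈ S, e ⊆ K) :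
    ∑ e ∈ S, w e ≤ inducedWeight 𝓔 w K :=
  sum_le_sum_of_subset_of_nonneg (fun e he => mem_filter.2 ⟨hS he, hK e he⟩)
    fun e he _ => hw e (mem_filter.1 he).1

theorem inducedWeight_le_sum (hw : ∀ e ∈ S, 0 ≤ w e) (hK : ∀ e ∈ 𝓔, e ⊆ K → e ∈ S) :
    inducedWeight 𝓔 w K ≤ ∑ e ∈ S, w e :=
  sum_le_sum_of_subset_of_nonneg
    (fun e he => hK e (mem_filter.1 he).1 (mem_filter.1 he).2) fun e he _ => hw e he

theorem exists_notMem_subset_of_sum_lt_inducedWeight (hw : ∀ e ∈ S, 0 ≤ w e)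
    (hlt : ∑ e ∈ S, w e < inducedWeight 𝓔 w K) : ∃ e ∈ 𝓔, e ∉ S ∧ e ⊆ K := by
  by_contra! hS
  exact hlt.not_ge <| inducedWeight_le_sum hw fun e he heK => by_contra fun heS => hS e he heS heK

namespace IsOptimalCover

theorem card_le_sum_card (hK : IsOptimalCover 𝓔 w τ K) (hw : ∀ e ∈ 𝓔, 0 ≤ w e) (hS : S ⊆ 𝓔)
    (hτ : τ * totalWeight 𝓔 w ≤ ∑ e ∈ S, w e) : #K ≤ ∑ e ∈ S, #e :=
  calc
    #K ≤ #(S.biUnion id) :=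
      hK.2 _ (hτ.trans (sum_le_inducedWeight hw hS fun _ he => subset_biUnion_of_mem id he))
    _ ≤ ∑ e ∈ S, #e := card_biUnion_le

theorem subset_and_subset_of_card_lt (hK : IsOptimalCover {A, B, C} w τ K)
    (hw : ∀ e ∈ ({A, B, C} : Finset (Finset V)), 0 ≤ w e) (hAB : A ≠ B)
    (hAC : Disjoint A C) (hBC : Disjoint B C) (hcardA : #A < #C) (hcardB : #B < #C)
    (hA : w A < τ * totalWeight {A, B, C} w) (hB : w B < τ * totalWeight {A, B, C} w)
    (hC : w C < τ * totalWeight {A, B, C} w)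
    (hτ : τ * totalWeight {A, B, C} w ≤ w A + w B) : A ⊆ K ∧ B ⊆ K := by
  have card_le : #K ≤ #A + #B := by
    rw [← sum_pair hAB] at hτ ⊢
    exact hK.card_le_sum_card hw (by grind) hτ
  have not_A_and_C : ¬ (A ⊆ K ∧ C ⊆ K) := fun ⟨hAK, hCK⟩ => by
    have := card_add_card_le_of_disjoint hAC hAK hCK
    lia
  have not_B_and_C : ¬ (B ⊆ K ∧ C ⊆ K) := fun ⟨hBK, hCK⟩ => by
    have := card_add_card_le_of_disjoint hBC hBK hCK
    lia
  have exists_ne {e : Finset V} (he : e ∈ ({A, B, C} : Finset (Finset V)))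
      (hlt : w e < τ * totalWeight {A, B, C} w) :
      ∃ f ∈ ({A, B, C} : Finset (Finset V)), f ≠ e ∧ f ⊆ K := by
    simpa only [mem_singleton] using exists_notMem_subset_of_sum_lt_inducedWeight (S := {e})
      (by simpa using hw e he) (by simpa using hlt.trans_le hK.1)
  have B_or_C : B ⊆ K ∨ C ⊆ K := by have := exists_ne (by simp) hA; grind
  have A_or_C : A ⊆ K ∨ C ⊆ K := by have := exists_ne (by simp) hB; grind
  have A_or_B : A ⊆ K ∨ B ⊆ K := by have := exists_ne (by simp) hC; grind
  tauto

theorem not_subset_and_subset_of_add_lt (hK : IsOptimalCover {A, B, C} w τ K)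
    (hw : ∀ e ∈ ({A, B, C} : Finset (Finset V)), 0 ≤ w e)
    (hAB : Disjoint A B) (hAC : Disjoint A C) (hBC : Disjoint B C) (hB : B.Nonempty)
    (hC : C.Nonempty) (hlt : w A + w B < τ * totalWeight {A, B, C} w)
    (hτ : τ * totalWeight {A, B, C} w ≤ w A + w C) : ¬ (A ⊆ K ∧ B ⊆ K) := by
  rintro ⟨hAK, hBK⟩
  have hAB_ne : A ≠ B := (hAB.symm.ne hB.ne_empty).symm
  have hAC_ne : A ≠ C := (hAC.symm.ne hC.ne_empty).symm
  have hCK : C ⊆ K := by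
    have := exists_notMem_subset_of_sum_lt_inducedWeight (S := {A, B}) (by grind)
      ((sum_pair hAB_ne).trans_lt (hlt.trans_le hK.1))
    grind
  have card_le : #K ≤ #A + #C := by
    rw [← sum_pair hAC_ne] at hτ ⊢
    exact hK.card_le_sum_card hw (by grind) hτ
  have le_card : #A + #B + #C ≤ #K := by
    rw [← card_union_of_disjoint hAB]
    exact card_add_card_le_of_disjoint (disjoint_union_left.2 ⟨hAC, hBC⟩)
      (union_subset hAK hBK) hCK
  have := hB.card_pos
  lia

end IsOptimalCover

theorem totalWeight_triple (hAB : A ≠ B) (hAC : A ≠ C) (hBC : B ≠ C) :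
    totalWeight {A, B, C} w = w A + w B + w C := by
  rw [totalWeight, sum_insert (by simp [hAB, hAC]), sum_pair hBC, add_assoc]

end Hypergraph

theorem exWeight_nonneg (e : Finset (Fin 7)) : 0 ≤ exWeight e := by
  unfold exWeight
  split_ifs <;> norm_num

theorem exWeight_P₁ : exWeight P₁ = 0.3 := if_pos rfl

theorem exWeight_P₂ : exWeight P₂ = 0.3 := by
  rw [exWeight, if_neg (by decide), if_pos rfl]

theorem exWeight_P₃ : exWeight P₃ = 0.4 := by
  rw [exWeight, if_neg (by decide), if_neg (by decide), if_pos rfl]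

theorem totalWeight_exWeight : totalWeight {P₁, P₂, P₃} exWeight = 1 := by
  rw [totalWeight_triple (by decide) (by decide) (by decide), exWeight_P₁, exWeight_P₂, exWeight_P₃]
  norm_num

theorem not_subset_of_isOptimalCover_exWeight (K₁ K₂ : Finset (Fin 7))
    (hK₁ : IsOptimalCover {P₁, P₂, P₃} exWeight 0.6 K₁)
    (hK₂ : IsOptimalCover {P₁, P₂, P₃} exWeight 0.7 K₂) : ¬ K₁ ⊆ K₂ := by
  intro hsub
  have hw : ∀ e ∈ ({P₁, P₂, P₃} : Finset (Finset (Fin 7))), 0 ≤ exWeight e :=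
    fun e _ => exWeight_nonneg e
  have low : P₁ ⊆ K₁ ∧ P₂ ⊆ K₁ := by
    apply hK₁.subset_and_subset_of_card_lt hw (by decide) (by decide) (by decide) (by decide)
      (by decide) <;>
    norm_num [totalWeight_exWeight, exWeight_P₁, exWeight_P₂, exWeight_P₃]
  have high : ¬ (P₁ ⊆ K₂ ∧ P₂ ⊆ K₂) := by
    apply hK₂.not_subset_and_subset_of_add_lt hw (by decide) (by decide) (by decide) (by decide)
      (by decide) <;>
    norm_num [totalWeight_exWeight, exWeight_P₁, exWeight_P₂, exWeight_P₃]
  exact high ⟨low.1.trans hsub, low.2.trans hsub⟩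

/-- non-monotonicity of exact optimal conformal subgraphs.
For the instance with three disjoint hyperedges `P₁, P₂, P₃` with weights
`0.3, 0.3, 0.4` and coverage targets `τ₁ = 0.6 < τ₂ = 0.7`, every optimal
solution `K₁` at target `τ₁` and every optimal solution `K₂` at target `τ₂`
satisfy `K₁ ⊄ K₂`.  In particular there exists a finite weighted hypergraph
(with positive weights and targets `0 < τ₁ < τ₂ < 1`) whose exact optimal
solutions are not monotone in the coverage target. -/
theorem optimal_conformal_subgraph_not_monotone :
    (∀ K₁ K₂ : Finset (Fin 7),
      IsOptimalCover {P₁, P₂, P₃} exWeight 0.6 K₁ →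
      IsOptimalCover {P₁, P₂, P₃} exWeight 0.7 K₂ →
      ¬ K₁ ⊆ K₂) ∧
    ∃ (V : Type) (_ : Fintype V) (_ : DecidableEq V)
      (𝓔 : Finset (Finset V)) (w : Finset V → ℝ) (τ₁ τ₂ : ℝ),
      (∀ e ∈ 𝓔, 0 ≤ w e) ∧ 0 < τ₁ ∧ τ₁ < τ₂ ∧ τ₂ < 1 ∧
      (∀ K₁ K₂ : Finset V,
        IsOptimalCover 𝓔 w τ₁ K₁ → IsOptimalCover 𝓔 w τ₂ K₂ → ¬ K₁ ⊆ K₂) := by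
  exact ⟨not_subset_of_isOptimalCover_exWeight, Fin 7, inferInstance, inferInstance,
    {P₁, P₂, P₃}, exWeight, 0.6, 0.7, fun e _ => exWeight_nonneg e, by norm_num, by norm_num,
    by norm_num, not_subset_of_isOptimalCover_exWeight⟩
end
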